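/- For tensors A ∈ ℝ^{n1×n2×n3}, B ∈ ℝ^{n2×m×n3} and C ∈ ℝ^{n1×m×n3}, one has mat(C) = mat(A) · mat(B) if and only if for every i with 1 ≤ i ≤ n3 the transformed slices satisfy C̃^{(i)} = Ã^{(i)} · B̃^{(i)}. (This is the correctness of the slicewise algorithm for computing the c-product.) -/

import Mathlib

open Matrix BigOperators Kronecker

noncomputable section

/-- The `n × n` discrete cosine transform (DCT) matrix, with 0-based indexing of the 1-based
formula `(C_n)_{ij} = √((2−δ_{i1})/n)·cos((i−1)(2j−1)π/(2n))`. -/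
def dctMatrix (n : ℕ) : Matrix (Fin n) (Fin n) ℝ :=
  Matrix.of fun i j =>
    Real.sqrt ((2 - if (i : ℕ) = 0 then 1 else 0) / n) *
      Real.cos ((i : ℝ) * (2 * (j : ℝ) + 1) * Real.pi / (2 * n))

/-- The `n × n` upshift matrix `Z`, with ones on the first superdiagonal. -/
def upshift (n : ℕ) : Matrix (Fin n) (Fin n) ℝ :=
  Matrix.of fun i j => if (i : ℕ) + 1 = (j : ℕ) then 1 else 0

/-- `W = diag(C_n(:,1))`, the diagonal matrix whose diagonal is the first column of the DCT
matrix. -/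
def Wdiag (n : ℕ) : Matrix (Fin n) (Fin n) ℝ :=
  Matrix.diagonal fun i => dctMatrix n i ⟨0, i.pos⟩

/-- The `n × n` transform matrix `M = W⁻¹ C_n (I + Z)`. -/
def transformM (n : ℕ) : Matrix (Fin n) (Fin n) ℝ :=
  (Wdiag n)⁻¹ * dctMatrix n * (1 + upshift n)

/-- The Hankel part `H_{p,q}` of the `(p,q)` block of `mat(A)` (0-based indices:
the 1-based conditions `p+q ≤ n3`, `p+q = n3+1`, `p+q ≥ n3+2` become
`p+q+1 < n3`, `p+q+1 = n3` and `p+q+1 > n3`, with blocks `A^{(p+q+1)}` resp. `0`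
resp. `A^{(2·n3−(p+q)−1)}` in 0-based numbering of the slices). -/
def hankelPart {n1 n2 n3 : ℕ} (A : Fin n3 → Matrix (Fin n1) (Fin n2) ℝ) (p q : Fin n3) :
    Matrix (Fin n1) (Fin n2) ℝ :=
  if h : p.val + q.val + 1 < n3 then A ⟨p.val + q.val + 1, h⟩
  else if h' : p.val + q.val + 1 = n3 then 0
  else A ⟨2 * n3 - (p.val + q.val) - 1, by
    have hp := p.isLt; have hq := q.isLt; omega⟩

/-- `mat(A)`: the block Toeplitz-plus-Hankel matrix associated with a third-order tensor `A`,
identified with the tuple of its frontal slices.  Rows are indexed by `Fin n3 × Fin n1`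
(block row, row within block) and columns by `Fin n3 × Fin n2`. -/
def tmat {n1 n2 n3 : ℕ} (A : Fin n3 → Matrix (Fin n1) (Fin n2) ℝ) :
    Matrix (Fin n3 × Fin n1) (Fin n3 × Fin n2) ℝ :=
  Matrix.of fun pi qj =>
    (A ⟨Nat.dist pi.1.val qj.1.val, by
        have hp := pi.1.isLt; have hq := qj.1.isLt
        simp only [Nat.dist]; omega⟩ + hankelPart A pi.1 qj.1) pi.2 qj.2

/-- The `p`-th transformed slice `Ã^{(p)} = Σ_q M_{pq} A^{(q)}` of a tensor `A`. -/
def tSlice {n1 n2 n3 : ℕ} (A : Fin n3 → Matrix (Fin n1) (Fin n2) ℝ) (p : Fin n3) :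
    Matrix (Fin n1) (Fin n2) ℝ :=
  ∑ q, transformM n3 p q • A q

/-- Toeplitz-plus-Hankel matrix `th(v)` of a vector `v ∈ ℝⁿ` (0-based indexing of the 1-based
formula of the paper). -/
def thMat {n : ℕ} (v : Fin n → ℝ) : Matrix (Fin n) (Fin n) ℝ :=
  Matrix.of fun p q =>
    v ⟨Nat.dist p.val q.val, by
        have hp := p.isLt; have hq := q.isLt; simp only [Nat.dist]; omega⟩ +
    (if h : p.val + q.val + 1 < n then v ⟨p.val + q.val + 1, h⟩
     else if h' : p.val + q.val + 1 = n then 0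
     else v ⟨2 * n - (p.val + q.val) - 1, by
       have hp := p.isLt; have hq := q.isLt; omega⟩)

/-- The product `a ⊛ B` of a tube `a ∈ ℝ^{1×1×n3}` (identified with a vector of `ℝ^{n3}`) with a
tensor `B`: the tensor whose transformed slices are `(a ⊛ B)~^{(p)} = (M a)_p • B̃^{(p)}`. -/
def tubeSMul {n1 n2 n3 : ℕ} (a : Fin n3 → ℝ) (B : Fin n3 → Matrix (Fin n1) (Fin n2) ℝ) :
    Fin n3 → Matrix (Fin n1) (Fin n2) ℝ :=
  fun t => ∑ p, (transformM n3)⁻¹ t p • ((transformM n3).mulVec a p • tSlice B p)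

/-- The c-product `a ⋆_c b` of two tubes: the tube whose transform is the componentwise product
of the transforms, `M (a ⋆_c b) = (M a) .* (M b)`. -/
def tubeCMul {n3 : ℕ} (a b : Fin n3 → ℝ) : Fin n3 → ℝ :=
  (transformM n3)⁻¹.mulVec fun p => (transformM n3).mulVec a p * (transformM n3).mulVec b p

/-- Frobenius norm of a real matrix. -/
def frobNorm {m n : ℕ} (B : Matrix (Fin m) (Fin n) ℝ) : ℝ :=
  Real.sqrt (∑ i, ∑ j, (B i j) ^ 2)

/-- Frobenius norm of a third-order tensor. -/
def tFrobNorm {n1 n2 n3 : ℕ} (A : Fin n3 → Matrix (Fin n1) (Fin n2) ℝ) : ℝ :=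
  Real.sqrt (∑ k, ∑ i, ∑ j, (A k i j) ^ 2)

/-- The `i`-th lateral slice `U(:,i,:)` of a tensor `U`: the `n1 × 1 × n3` tensor whose `k`-th
frontal slice is the `i`-th column of `U^{(k)}`. -/
def lateralSlice {n1 n2 n3 : ℕ} (U : Fin n3 → Matrix (Fin n1) (Fin n2) ℝ) (i : Fin n2) :
    Fin n3 → Matrix (Fin n1) (Fin 1) ℝ :=
  fun k => Matrix.of fun r _ => U k r i

/-- The `(i,j)` tube `S(i,j,:)` of a tensor `S`: the `1 × 1 × n3` tensor whose `k`-th frontal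
slice is the `(i,j)` entry of `S^{(k)}`. -/
def entryTube {n1 n2 n3 : ℕ} (S : Fin n3 → Matrix (Fin n1) (Fin n2) ℝ) (i : Fin n1) (j : Fin n2) :
    Fin n3 → Matrix (Fin 1) (Fin 1) ℝ :=
  fun k => Matrix.of fun _ _ => S k i j

/-- Slicewise transpose of a tensor. -/
def sTranspose {n1 n2 n3 : ℕ} (A : Fin n3 → Matrix (Fin n1) (Fin n2) ℝ) :
    Fin n3 → Matrix (Fin n2) (Fin n1) ℝ :=
  fun k => (A k)ᵀ

/-- `TVect(A)`: stacking the lateral slices of `A` one below the other; the `k`-th frontal slice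
of `TVect(A)` is obtained by stacking the columns of `A^{(k)}` (entry `r = j·n1 + i` is
`A^{(k)}_{i,j}`). -/
def tvect {n1 n2 n3 : ℕ} (A : Fin n3 → Matrix (Fin n1) (Fin n2) ℝ) :
    Fin n3 → Matrix (Fin (n1 * n2)) (Fin 1) ℝ :=
  fun k => Matrix.of fun r _ =>
    A k ⟨r.val % n1, Nat.mod_lt _ (Nat.pos_of_ne_zero fun h0 => absurd r.isLt (by simp [h0]))⟩
        ⟨r.val / n1, Nat.div_lt_of_lt_mul r.isLt⟩

/-!
The discrete cosine transform diagonalizes every Toeplitz-plus-Hankel matrix `th(v)`. Indeed, row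
`k` of `C_n` samples `cos (k θ_j)` with `θ_j = (2j + 1)π / (2n)`, which is symmetric under the
reflections `j ↦ -1 - j` and `j ↦ 2n - 1 - j`; the Hankel part folds indices by exactly these
reflections, so multiplying this row by `th(e_t)` gives `cos (k θ_{j+t}) + cos (k θ_{j-t})`, a
multiple of `cos (k θ_j)`. Hence `C_n th(v) = diag(d) C_n` for some `d`, and as the first column of
`th(v)` is `(I + Z) v`, comparing first columns yields `C_n (I + Z) v = W d`, that is, `d = M v`.

Applied to every tube of a tensor `A`, this says
`(C_n ⊗ I) mat(A) = diag(Ã^{(1)}, …, Ã^{(n)}) (C_n ⊗ I)`, where `n = n3`. The matrix `C_n` is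
invertible because its rows are nonzero multiples of the Chebyshev polynomials `T_0, …, T_{n-1}`
evaluated at the distinct nodes `cos θ_j`, so products of the matrices `mat(A)` correspond to
products of the diagonal blocks.
-/

section PolynomialValues

open Polynomial

variable {n : ℕ} {R : Type*} [CommRing R]

lemma det_eval_eq_det_vandermonde_mul_prod_coeff (x : Fin n → R) (p : Fin n → R[X])
    (hp : ∀ i, (p i).natDegree ≤ i) :
    (of fun i j => (p j).eval (x i)).det =
      (vandermonde x).det * ∏ i, (p i).coeff i := by
  rw [eval_matrixOfPolynomials_eq_vandermonde_mul_matrixOfPolynomials x p hp, det_mul,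
    det_of_isUpperTriangular (matrixOfPolynomials_blockTriangular p hp)]
  rfl

lemma det_eval_ne_zero_of_injective [IsDomain R] {x : Fin n → R} (hx : Function.Injective x)
    {p : Fin n → R[X]} (hp : ∀ i, (p i).degree = (i : ℕ)) :
    (of fun i j => (p j).eval (x i)).det ≠ 0 := by
  rw [det_eval_eq_det_vandermonde_mul_prod_coeff x p fun i =>
    natDegree_le_of_degree_le (hp i).le]
  exact mul_ne_zero (det_vandermonde_ne_zero_iff.2 hx)
    (Finset.prod_ne_zero_iff.2 fun i _ => coeff_ne_zero_of_eq_degree (hp i))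

end PolynomialValues

section DCT

/-- The normalization `√((2 - δ_{k0}) / n)` of the `k`-th row of the DCT matrix (0-based `k`). -/
def dctScale (n k : ℕ) : ℝ :=
  √((2 - if k = 0 then 1 else 0) / n)

/-- The `j`-th Chebyshev-Gauss angle `(2j + 1)π / (2n)`, with 0-based `j`. The index ranges over
all of `ℤ` so that `cos (k * dctAngle n j)` can be evaluated at reflected indices. -/
def dctAngle (n : ℕ) (j : ℤ) : ℝ :=
  (2 * j + 1) * Real.pi / (2 * n)

variable {n : ℕ}

lemma dctMatrix_apply (k j : Fin n) :
    dctMatrix n k j = dctScale n k * Real.cos (k * dctAngle n j) := by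
  simp only [dctMatrix, dctScale, dctAngle, of_apply, Int.cast_natCast]
  ring_nf

lemma dctScale_pos (hn : 0 < n) (k : ℕ) : 0 < dctScale n k := by
  have : (0 : ℝ) < n := by exact_mod_cast hn
  refine Real.sqrt_pos.2 (div_pos ?_ this)
  split_ifs <;> norm_num

lemma dctAngle_neg_one_sub (j : ℤ) : dctAngle n (-1 - j) = -dctAngle n j := by
  simp only [dctAngle]
  push_cast
  ring

lemma dctAngle_two_mul_sub (hn : n ≠ 0) (j : ℤ) :
    dctAngle n (2 * n - 1 - j) = 2 * Real.pi - dctAngle n j := by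
  simp only [dctAngle]
  push_cast
  field_simp
  ring

lemma cos_mul_dctAngle_neg_one_sub (k : ℕ) (j : ℤ) :
    Real.cos (k * dctAngle n (-1 - j)) = Real.cos (k * dctAngle n j) := by
  rw [dctAngle_neg_one_sub, mul_neg, Real.cos_neg]

lemma cos_mul_dctAngle_two_mul_sub (hn : n ≠ 0) (k : ℕ) (j : ℤ) :
    Real.cos (k * dctAngle n (2 * n - 1 - j)) = Real.cos (k * dctAngle n j) := by
  rw [dctAngle_two_mul_sub hn, mul_sub, Real.cos_nat_mul_two_pi_sub]

lemma cos_mul_dctAngle_add_add_cos_mul_dctAngle_sub (k : ℕ) (j t : ℤ) :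
    Real.cos (k * dctAngle n (j + t)) + Real.cos (k * dctAngle n (j - t)) =
      2 * Real.cos (k * (t * Real.pi / n)) * Real.cos (k * dctAngle n j) := by
  have h_add : k * dctAngle n (j + t) = k * (t * Real.pi / n) + k * dctAngle n j := by
    simp only [dctAngle]; push_cast; ring
  have h_sub : k * dctAngle n (j - t) = k * dctAngle n j - k * (t * Real.pi / n) := by
    simp only [dctAngle]; push_cast; ring
  rw [h_add, h_sub, Real.cos_add, Real.cos_sub]
  ring

lemma dctAngle_mem_Ioo (j : Fin n) : dctAngle n j ∈ Set.Ioo 0 Real.pi := by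
  have hn : (0 : ℝ) < n := by exact_mod_cast j.pos
  have hj : (j : ℝ) + 1 ≤ n := by exact_mod_cast j.isLt
  rw [dctAngle, Int.cast_natCast]
  refine ⟨by positivity, (div_lt_iff₀ (by positivity)).2 ?_⟩
  nlinarith [Real.pi_pos]

lemma cos_dctAngle_injective : Function.Injective fun j : Fin n => Real.cos (dctAngle n j) := by
  intro i j hij
  have hn : (n : ℝ) ≠ 0 := by exact_mod_cast i.pos.ne'
  have h_angle : dctAngle n i = dctAngle n j :=
    Real.injOn_cos (Set.Ioo_subset_Icc_self (dctAngle_mem_Ioo i))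
      (Set.Ioo_subset_Icc_self (dctAngle_mem_Ioo j)) hij
  simpa [dctAngle, hn, Real.pi_ne_zero, Fin.val_inj] using h_angle

lemma dctMatrix_apply_zero_pos (k : Fin n) : 0 < dctMatrix n k ⟨0, k.pos⟩ := by
  have hn : (0 : ℝ) < n := by exact_mod_cast k.pos
  have hk : (k : ℝ) < n := by exact_mod_cast k.isLt
  rw [dctMatrix_apply]
  refine mul_pos (dctScale_pos k.pos k) (Real.cos_pos_of_mem_Ioo ⟨?_, ?_⟩)
  · refine (neg_lt_zero.2 Real.pi_div_two_pos).trans_le ?_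
    exact mul_nonneg k.val.cast_nonneg (dctAngle_mem_Ioo (⟨0, k.pos⟩ : Fin n)).1.le
  · have h_angle : (k : ℝ) * dctAngle n (0 : ℕ) = k / n * (Real.pi / 2) := by
      simp only [dctAngle]; push_cast; ring
    rw [h_angle]
    exact mul_lt_of_lt_one_left Real.pi_div_two_pos ((div_lt_one hn).2 hk)

lemma isUnit_dctMatrix (n : ℕ) : IsUnit (dctMatrix n) := by
  let p (k : Fin n) : Polynomial ℝ := Polynomial.C (dctScale n k) * Polynomial.Chebyshev.T ℝ k
  have hp (k : Fin n) : (p k).degree = (k : ℕ) := by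
    simp [p, Polynomial.degree_C_mul (dctScale_pos k.pos k).ne']
  have h_eval : (dctMatrix n)ᵀ = of fun j k : Fin n => (p k).eval (Real.cos (dctAngle n j)) := by
    ext j k
    simp [p, dctMatrix_apply, Polynomial.Chebyshev.T_real_cos]
  rw [isUnit_iff_isUnit_det, isUnit_iff_ne_zero, ← det_transpose, h_eval]
  exact det_eval_ne_zero_of_injective cos_dctAngle_injective hp

end DCT

section ToeplitzPlusHankel

variable {n : ℕ}

lemma thMat_eq_sum_smul_thMat_single (v : Fin n → ℝ) :
    thMat v = ∑ t, v t • thMat (Pi.single t 1) := by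
  ext p q
  simp only [thMat, Matrix.sum_apply, Matrix.smul_apply, of_apply, smul_eq_mul, mul_add,
    Finset.sum_add_distrib]
  split_ifs <;> simp [Pi.single_apply]

lemma thMat_single_of_eq_zero {t : Fin n} (ht : (t : ℕ) = 0) : thMat (Pi.single t 1) = 1 := by
  ext p q
  simp only [thMat, of_apply, Pi.single_apply, one_apply, Fin.ext_iff, Nat.dist]
  split_ifs <;> first | omega | norm_num

/- Column `q` of `thMat (Pi.single t 1)` picks out the rows `q + t` and `q - t`, where a row outside
`0, …, n - 1` is folded back by the reflection in `n - 1/2` or in `-1/2`, respectively. -/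
lemma thMat_single_apply_of_ne_zero {t q a b : Fin n} (ht : (t : ℕ) ≠ 0)
    (ha : (a : ℤ) = q + t ∨ (a : ℤ) = 2 * n - 1 - (q + t))
    (hb : (b : ℤ) = q - t ∨ (b : ℤ) = -1 - (q - t)) (p : Fin n) :
    thMat (Pi.single t 1) p q = (if p = a then 1 else 0) + (if p = b then 1 else 0) := by
  simp only [thMat, of_apply, Pi.single_apply, Fin.ext_iff, Nat.dist]
  split_ifs <;> first | omega | norm_num

lemma sum_mul_thMat_single_of_ne_zero {f : ℤ → ℝ} (hf_left : ∀ z, f (-1 - z) = f z)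
    (hf_right : ∀ z, f (2 * n - 1 - z) = f z) {t : Fin n} (ht : (t : ℕ) ≠ 0) (q : Fin n) :
    ∑ p : Fin n, f p * thMat (Pi.single t 1) p q = f (q + t) + f (q - t) := by
  obtain ⟨a, ha⟩ : ∃ a : Fin n, (a : ℤ) = q + t ∨ (a : ℤ) = 2 * n - 1 - (q + t) := by
    by_cases h : (q : ℕ) + t < n
    · exact ⟨⟨q + t, h⟩, .inl (by simp)⟩
    · exact ⟨⟨2 * n - 1 - (q + t), by omega⟩, .inr (by dsimp only; omega)⟩
  obtain ⟨b, hb⟩ : ∃ b : Fin n, (b : ℤ) = q - t ∨ (b : ℤ) = -1 - (q - t) := by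
    by_cases h : (t : ℕ) ≤ q
    · exact ⟨⟨q - t, by omega⟩, .inl (by dsimp only; omega)⟩
    · exact ⟨⟨t - q - 1, by omega⟩, .inr (by dsimp only; omega)⟩
  have hfa : f a = f (q + t) := by
    rcases ha with h | h <;> rw [h]
    exact hf_right _
  have hfb : f b = f (q - t) := by
    rcases hb with h | h <;> rw [h]
    exact hf_left _
  simp [thMat_single_apply_of_ne_zero ht ha hb, mul_add, Finset.sum_add_distrib, hfa, hfb]

lemma dctMatrix_mul_thMat_single_of_ne_zero {t : Fin n} (ht : (t : ℕ) ≠ 0) :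
    dctMatrix n * thMat (Pi.single t 1) =
      diagonal (fun k : Fin n => 2 * Real.cos (k * (t * Real.pi / n))) * dctMatrix n := by
  ext k q
  have h_sum := sum_mul_thMat_single_of_ne_zero
    (f := fun z => Real.cos (k * dctAngle n z)) (cos_mul_dctAngle_neg_one_sub k)
    (cos_mul_dctAngle_two_mul_sub k.pos.ne' k) ht q
  rw [cos_mul_dctAngle_add_add_cos_mul_dctAngle_sub, Int.cast_natCast] at h_sum
  rw [diagonal_mul, mul_apply]
  simp only [dctMatrix_apply, mul_assoc, ← Finset.mul_sum] at h_sum ⊢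
  rw [h_sum]
  ring

lemma exists_dctMatrix_mul_thMat (v : Fin n → ℝ) :
    ∃ d, dctMatrix n * thMat v = diagonal d * dctMatrix n := by
  have h_single (t : Fin n) :
      ∃ d, dctMatrix n * thMat (Pi.single t 1) = diagonal d * dctMatrix n := by
    by_cases ht : (t : ℕ) = 0
    · exact ⟨1, by simp [thMat_single_of_eq_zero ht]⟩
    · exact ⟨_, dctMatrix_mul_thMat_single_of_ne_zero ht⟩
  choose d hd using h_single
  refine ⟨∑ t, v t • d t, ?_⟩
  rw [thMat_eq_sum_smul_thMat_single, Matrix.mul_sum]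
  simp only [Matrix.mul_smul, hd]
  ext k q
  simp [Matrix.sum_apply, diagonal_mul, Finset.sum_mul, mul_assoc]

lemma one_add_upshift_mulVec (v : Fin n → ℝ) (p : Fin n) :
    ((1 + upshift n) *ᵥ v) p = thMat v p ⟨0, p.pos⟩ := by
  rw [add_mulVec, one_mulVec, Pi.add_apply]
  simp only [thMat, of_apply, Nat.dist_zero_right, add_zero]
  congr 1
  split_ifs with h_lt h_eq
  · have h_iff (j : Fin n) : (p : ℕ) + 1 = j ↔ ⟨p + 1, h_lt⟩ = j := by rw [Fin.ext_iff]
    simp [upshift, mulVec, dotProduct, h_iff]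
  · have h_ne (j : Fin n) : (p : ℕ) + 1 ≠ j := by omega
    simp [upshift, mulVec, dotProduct, h_ne]
  · omega

lemma transformM_mulVec_eq_of_dctMatrix_mul_thMat {v d : Fin n → ℝ}
    (h : dctMatrix n * thMat v = diagonal d * dctMatrix n) : transformM n *ᵥ v = d := by
  have hW : IsUnit (Wdiag n).det := by
    rw [Wdiag, det_diagonal]
    exact (Finset.prod_ne_zero_iff.2 fun k _ => (dctMatrix_apply_zero_pos k).ne').isUnit
  have h_col : dctMatrix n *ᵥ ((1 + upshift n) *ᵥ v) = Wdiag n *ᵥ d := by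
    ext k
    have hk := congrFun (congrFun h k) ⟨0, k.pos⟩
    rw [mul_apply, diagonal_mul] at hk
    rw [Wdiag, mulVec_diagonal, mul_comm, ← hk, mulVec, dotProduct]
    simp only [one_add_upshift_mulVec]
  rw [transformM, ← mulVec_mulVec, ← mulVec_mulVec, h_col, mulVec_mulVec, nonsing_inv_mul _ hW,
    one_mulVec]

theorem dctMatrix_mul_thMat (v : Fin n → ℝ) :
    dctMatrix n * thMat v = diagonal (transformM n *ᵥ v) * dctMatrix n := by
  obtain ⟨d, hd⟩ := exists_dctMatrix_mul_thMat v
  rw [hd, transformM_mulVec_eq_of_dctMatrix_mul_thMat hd]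

end ToeplitzPlusHankel

section Tensor

variable {n1 n2 m n3 : ℕ}

/-- The block diagonal matrix `diag(Ã^{(1)}, …, Ã^{(n3)})`, with rows and columns indexed by
(block, index within the block) as in `tmat`, hence the swap of Mathlib's `blockDiagonal`. -/
def tSliceDiagonal (A : Fin n3 → Matrix (Fin n1) (Fin n2) ℝ) :
    Matrix (Fin n3 × Fin n1) (Fin n3 × Fin n2) ℝ :=
  reindex (Equiv.prodComm _ _) (Equiv.prodComm _ _) (blockDiagonal (tSlice A))

lemma tSliceDiagonal_apply (A : Fin n3 → Matrix (Fin n1) (Fin n2) ℝ) (k l : Fin n3)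
    (i : Fin n1) (j : Fin n2) :
    tSliceDiagonal A (k, i) (l, j) = if k = l then tSlice A k i j else 0 :=
  rfl

lemma tSliceDiagonal_mul_eq_iff (A : Fin n3 → Matrix (Fin n1) (Fin n2) ℝ)
    (B : Fin n3 → Matrix (Fin n2) (Fin m) ℝ) (C : Fin n3 → Matrix (Fin n1) (Fin m) ℝ) :
    tSliceDiagonal C = tSliceDiagonal A * tSliceDiagonal B ↔
      ∀ i, tSlice C i = tSlice A i * tSlice B i := by
  have h_mul : tSliceDiagonal A * tSliceDiagonal B =
      reindex (Equiv.prodComm _ _) (Equiv.prodComm _ _)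
        (blockDiagonal fun i => tSlice A i * tSlice B i) := by
    simp only [tSliceDiagonal, blockDiagonal_mul, reindex_apply, submatrix_mul_equiv]
  rw [h_mul, tSliceDiagonal, (reindex _ _).apply_eq_iff_eq, blockDiagonal_inj, funext_iff]

lemma tmat_apply (A : Fin n3 → Matrix (Fin n1) (Fin n2) ℝ) (p q : Fin n3)
    (i : Fin n1) (j : Fin n2) : tmat A (p, i) (q, j) = thMat (fun t => A t i j) p q := by
  simp only [tmat, thMat, hankelPart, of_apply, Matrix.add_apply]
  split_ifs <;> rfl

lemma tSlice_apply (A : Fin n3 → Matrix (Fin n1) (Fin n2) ℝ) (k : Fin n3)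
    (i : Fin n1) (j : Fin n2) : tSlice A k i j = (transformM n3 *ᵥ fun t => A t i j) k := by
  simp [tSlice, Matrix.sum_apply, mulVec, dotProduct]

theorem dctMatrix_kronecker_one_mul_tmat (A : Fin n3 → Matrix (Fin n1) (Fin n2) ℝ) :
    (dctMatrix n3 ⊗ₖ (1 : Matrix (Fin n1) (Fin n1) ℝ)) * tmat A =
      tSliceDiagonal A * (dctMatrix n3 ⊗ₖ (1 : Matrix (Fin n2) (Fin n2) ℝ)) := by
  ext ⟨k, i⟩ ⟨q, j⟩
  have h := congrFun (congrFun (dctMatrix_mul_thMat fun t => A t i j) k) q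
  rw [mul_apply, diagonal_mul, ← tSlice_apply] at h
  simpa [mul_apply, Fintype.sum_prod_type, one_apply, tmat_apply, tSliceDiagonal_apply] using h

end Tensor

/-- `mat(C) = mat(A) · mat(B)` if and only if for every `i` the transformed
slices satisfy `C̃^{(i)} = Ã^{(i)} · B̃^{(i)}` (correctness of the slicewise algorithm for the
c-product). -/
theorem cProd_iff_slicewise {n1 n2 m n3 : ℕ}
    (A : Fin n3 → Matrix (Fin n1) (Fin n2) ℝ) (B : Fin n3 → Matrix (Fin n2) (Fin m) ℝ)
    (C : Fin n3 → Matrix (Fin n1) (Fin m) ℝ) :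
    tmat C = tmat A * tmat B ↔ ∀ i, tSlice C i = tSlice A i * tSlice B i := by
  let K (l : ℕ) := dctMatrix n3 ⊗ₖ (1 : Matrix (Fin l) (Fin l) ℝ)
  let invK (l : ℕ) : Invertible (K l) :=
    (IsUnit.kronecker (isUnit_dctMatrix n3) isUnit_one).invertible
  have h_prod : K n1 * (tmat A * tmat B) = tSliceDiagonal A * tSliceDiagonal B * K m := by
    rw [← Matrix.mul_assoc, dctMatrix_kronecker_one_mul_tmat, Matrix.mul_assoc,
      dctMatrix_kronecker_one_mul_tmat, Matrix.mul_assoc]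
  calc
    tmat C = tmat A * tmat B ↔ K n1 * tmat C = K n1 * (tmat A * tmat B) :=
      (Matrix.mul_right_inj_of_invertible _).symm
    _ ↔ tSliceDiagonal C * K m = tSliceDiagonal A * tSliceDiagonal B * K m := by
      rw [dctMatrix_kronecker_one_mul_tmat, h_prod]
    _ ↔ tSliceDiagonal C = tSliceDiagonal A * tSliceDiagonal B :=
      Matrix.mul_left_inj_of_invertible _
    _ ↔ ∀ i, tSlice C i = tSlice A i * tSlice B i := tSliceDiagonal_mul_eq_iff A B C

end
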